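/- arXiv:math/0401300 — 2 statements merged into one kernel-verified Lean document; each statement's English description precedes it below -/
import Mathlib

section
/- For all nonnegative integers m and n, the product m!·n!·(m+n)! divides (2m)!·(2n)! (equivalently, (2m)!·(2n)!/(m!·n!·(m+n)!) is an integer). -/
/-!
Write `S(m, n) = (2m)! (2n)! / (m! n! (m + n)!)`. Raising `m` by one multiplies `S(m, n)` by
`(4m + 2) / (m + n + 1)`, raising `n` by one multiplies it by `(4n + 2) / (m + n + 1)`, and these
two factors add up to `4`. Hence `S(m, n + 1) = 4 S(m, n) - S(m + 1, n)`, and integrality follows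
by induction on `n` from the central binomial coefficients `S(m, 0)`.
-/

open scoped Nat

/-- The super Catalan number `S(m, n)`, taken in `ℚ` so that the quotient is an exact division
before its integrality is known. -/
def superCatalan (m n : ℕ) : ℚ :=
  ((2 * m)! * (2 * n)! : ℕ) / (m ! * n ! * (m + n)! : ℕ)

theorem superCatalan_zero_right (m : ℕ) : superCatalan m 0 = m.centralBinom := by
  have h_choose := Nat.cast_add_choose ℚ (a := m) (b := m)
  rw [← two_mul, ← Nat.centralBinom_eq_two_mul_choose] at h_choose
  simp [superCatalan, h_choose]

theorem superCatalan_comm (m n : ℕ) : superCatalan m n = superCatalan n m := by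
  rw [superCatalan, superCatalan, mul_comm (2 * m)!, mul_comm m !, add_comm m]

theorem superCatalan_succ_left (m n : ℕ) :
    superCatalan (m + 1) n = (4 * m + 2) / (m + n + 1) * superCatalan m n := by
  simp only [superCatalan, mul_add_one, add_right_comm m 1 n, Nat.factorial_succ]
  push_cast
  field_simp
  ring

theorem superCatalan_succ_right (m n : ℕ) :
    superCatalan m (n + 1) = (4 * n + 2) / (m + n + 1) * superCatalan m n := by
  rw [superCatalan_comm, superCatalan_succ_left, superCatalan_comm n m, add_comm (n : ℚ) m]

theorem superCatalan_succ_left_add_succ_right (m n : ℕ) :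
    superCatalan (m + 1) n + superCatalan m (n + 1) = 4 * superCatalan m n := by
  rw [superCatalan_succ_left, superCatalan_succ_right]
  field_simp
  ring

theorem exists_int_eq_superCatalan (m n : ℕ) : ∃ z : ℤ, (z : ℚ) = superCatalan m n := by
  induction n generalizing m with
  | zero => exact ⟨m.centralBinom, by simp [superCatalan_zero_right]⟩
  | succ n ih =>
    obtain ⟨a, ha⟩ := ih m
    obtain ⟨b, hb⟩ := ih (m + 1)
    refine ⟨4 * a - b, ?_⟩
    push_cast
    rw [ha, hb]
    exact (eq_sub_of_add_eq' (superCatalan_succ_left_add_succ_right m n)).symm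

theorem catalan_observation (m n : ℕ) :
    (Nat.factorial m * Nat.factorial n * Nat.factorial (m + n)) ∣
      (Nat.factorial (2 * m) * Nat.factorial (2 * n)) := by
  obtain ⟨z, hz⟩ := exists_int_eq_superCatalan m n
  have h_den : m ! * n ! * (m + n)! ≠ 0 := by positivity
  rw [← Rat.den_div_natCast_eq_one_iff _ _ h_den, ← superCatalan, ← hz, Rat.den_intCast]
end

section
/- For every integer n ≥ 1, the Catalan number C_n equals the number of ordered pairs (P,Q) of Dyck paths with semilength(P) + semilength(Q) = n such that P is nonempty and h(P) ≤ h(Q) + 1. -/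
/-- A ballot path: a sequence of steps, each `+1` or `-1`, all of whose
partial sums are nonnegative. -/
def IsBallot (P : List ℤ) : Prop :=
  (∀ s ∈ P, s = 1 ∨ s = -1) ∧ ∀ k, 0 ≤ (P.take k).sum

/-- A Dyck path of semilength `n`: a ballot path with `2n` steps ending at level `0`. -/
def IsDyck (n : ℕ) (P : List ℤ) : Prop :=
  IsBallot P ∧ P.length = 2 * n ∧ P.sum = 0

/-- The height of a path: the maximum of its partial sums (`0` for the empty path). -/
def pathHeight (P : List ℤ) : ℤ :=
  (((List.range (P.length + 1)).map fun k => (P.take k).sum).foldr max 0)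

/-!
Merge a pair `(U B D C, Q)` into the Dyck path `B U Q D C`, which has the same total semilength.
The condition `h(U B D C) ≤ h(Q) + 1` says that `h(B) ≤ h(Q)` and `h(C) ≤ h(Q) + 1`, i.e. that
`U Q D` is the first of the prime factors of `B U Q D C` of maximal height. A nonempty Dyck path
has exactly one such factor, so merging is a bijection onto the nonempty Dyck paths.
-/

open DyckStep

/-- The value `1` or `-1` by which a step changes the level of a path. -/
def stepValue : DyckStep → ℤ
  | U => 1
  | D => -1

/-- The path traced by a Dyck word of Mathlib, in the `±1` encoding of `IsDyck`. -/
def dyckPath (w : DyckWord) : List ℤ := w.toList.map stepValue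

/-- The height of the path traced by a Dyck word. -/
def dyckHeight (w : DyckWord) : ℤ := pathHeight (dyckPath w)

section PathHeight

lemma foldr_max_le_iff {α : Type*} [LinearOrder α] (L : List α) (a m : α) :
    L.foldr max a ≤ m ↔ a ≤ m ∧ ∀ x ∈ L, x ≤ m := by
  induction L with
  | nil => simp
  | cons x L ih => simp only [List.foldr_cons, max_le_iff, ih, List.forall_mem_cons]; tauto

lemma pathHeight_le_iff {P : List ℤ} {m : ℤ} :
    pathHeight P ≤ m ↔ ∀ k, (P.take k).sum ≤ m := by
  simp only [pathHeight, foldr_max_le_iff, List.forall_mem_map, List.mem_range, Nat.lt_succ_iff]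
  refine ⟨fun ⟨_, h⟩ k => ?_, fun h => ⟨by simpa using h 0, fun k _ => h k⟩⟩
  rw [List.take_eq_take_min]
  exact h _ (min_le_right _ _)

lemma pathHeight_nonneg (P : List ℤ) : 0 ≤ pathHeight P := by
  simpa using pathHeight_le_iff.1 (le_refl (pathHeight P)) 0

@[simp]
lemma pathHeight_nil : pathHeight [] = 0 := by simp [pathHeight]

lemma pathHeight_cons (s : ℤ) (P : List ℤ) :
    pathHeight (s :: P) = max 0 (s + pathHeight P) := by
  refine eq_of_forall_ge_iff fun m => ?_
  rw [max_le_iff, ← le_sub_iff_add_le', pathHeight_le_iff, pathHeight_le_iff,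
    ← Nat.and_forall_add_one]
  simp only [List.take_zero, List.sum_nil, List.take_succ_cons, List.sum_cons, le_sub_iff_add_le']

lemma pathHeight_append (P Q : List ℤ) :
    pathHeight (P ++ Q) = max (pathHeight P) (P.sum + pathHeight Q) := by
  induction P with
  | nil => simp [pathHeight_nonneg]
  | cons s P ih =>
    simp only [List.cons_append, pathHeight_cons, ih, List.sum_cons]
    lia

end PathHeight

section DyckPath

lemma stepValue_injective : Function.Injective stepValue := by
  rintro (_ | _) (_ | _) h <;> simp_all [stepValue]

instance : CanLift ℤ DyckStep stepValue fun s => s = 1 ∨ s = -1 where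
  prf _ hs := hs.elim (fun h => ⟨U, h.symm⟩) fun h => ⟨D, h.symm⟩

lemma sum_map_stepValue (l : List DyckStep) :
    (l.map stepValue).sum = l.count U - l.count D := by
  induction l with
  | nil => simp
  | cons s l ih => cases s <;> simp [stepValue, ih] <;> ring

lemma isBallot_map_stepValue_iff {l : List DyckStep} :
    IsBallot (l.map stepValue) ↔ ∀ k, (l.take k).count D ≤ (l.take k).count U := by
  have steps : ∀ s ∈ l.map stepValue, s = 1 ∨ s = -1 :=
    List.forall_mem_map.2 fun s _ => by cases s <;> simp [stepValue]
  simp only [IsBallot, ← List.map_take, sum_map_stepValue, sub_nonneg, Nat.cast_le]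
  exact and_iff_right steps

lemma dyckPath_injective : Function.Injective dyckPath := fun _ _ h =>
  DyckWord.ext (stepValue_injective.list_map h)

@[simp]
lemma dyckPath_eq_nil {w : DyckWord} : dyckPath w = [] ↔ w = 0 := by
  rw [dyckPath, List.map_eq_nil_iff, DyckWord.toList_eq_nil]

@[simp]
lemma dyckPath_zero : dyckPath 0 = [] := rfl

@[simp]
lemma dyckPath_add (v w : DyckWord) : dyckPath (v + w) = dyckPath v ++ dyckPath w :=
  List.map_append

@[simp]
lemma dyckPath_nest (w : DyckWord) : dyckPath w.nest = 1 :: (dyckPath w ++ [-1]) := by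
  simp [dyckPath, DyckWord.nest, stepValue]

@[simp]
lemma sum_dyckPath (w : DyckWord) : (dyckPath w).sum = 0 := by
  rw [dyckPath, sum_map_stepValue, w.count_U_eq_count_D, sub_self]

lemma isDyck_iff_exists_dyckPath {n : ℕ} {P : List ℤ} :
    IsDyck n P ↔ ∃ w : DyckWord, w.semilength = n ∧ dyckPath w = P := by
  constructor
  · rintro ⟨hP, hlength, hsum⟩
    lift P to List DyckStep using hP.1 with l
    rw [sum_map_stepValue, sub_eq_zero, Nat.cast_inj] at hsum
    let w : DyckWord := ⟨l, hsum, isBallot_map_stepValue_iff.1 hP⟩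
    rw [List.length_map, ← w.two_mul_semilength_eq_length] at hlength
    exact ⟨w, by lia, rfl⟩
  · rintro ⟨w, rfl, rfl⟩
    refine ⟨isBallot_map_stepValue_iff.2 w.count_D_le_count_U, ?_, sum_dyckPath w⟩
    rw [dyckPath, List.length_map, w.two_mul_semilength_eq_length]

end DyckPath

section DyckHeight

lemma dyckHeight_nonneg (w : DyckWord) : 0 ≤ dyckHeight w := pathHeight_nonneg _

@[simp]
lemma dyckHeight_zero : dyckHeight 0 = 0 := by simp [dyckHeight]

@[simp]
lemma dyckHeight_add (v w : DyckWord) :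
    dyckHeight (v + w) = max (dyckHeight v) (dyckHeight w) := by
  simp [dyckHeight, pathHeight_append]

@[simp]
lemma dyckHeight_nest (w : DyckWord) : dyckHeight w.nest = dyckHeight w + 1 := by
  have := pathHeight_nonneg (dyckPath w)
  simp only [dyckHeight, dyckPath_nest, pathHeight_cons, pathHeight_append, sum_dyckPath,
    pathHeight_nil]
  lia

end DyckHeight

section Factorization

@[elab_as_elim]
lemma dyckWord_induction {motive : DyckWord → Prop} (zero : motive 0)
    (nest_add : ∀ u v, motive u → motive v → motive (u.nest + v)) (w : DyckWord) : motive w := by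
  rw [← w.ofTree_toTree]
  induction w.toTree with
  | nil => exact zero
  | node _ l r ihl ihr => exact nest_add _ _ ihl ihr

lemma nest_add_eq_nest_add_iff {u v u' v' : DyckWord} :
    u.nest + v = u'.nest + v' ↔ u = u' ∧ v = v' := by
  refine ⟨fun h => ⟨?_, ?_⟩, by rintro ⟨rfl, rfl⟩; rfl⟩
  · simpa using congrArg DyckWord.insidePart h
  · simpa using congrArg DyckWord.outsidePart h

lemma dyckHeight_add_nest_add {b q c : DyckWord} (hb : dyckHeight b ≤ dyckHeight q)
    (hc : dyckHeight c ≤ dyckHeight q + 1) :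
    dyckHeight (b + q.nest + c) = dyckHeight q + 1 := by
  simp only [dyckHeight_add, dyckHeight_nest]
  lia

lemma exists_add_nest_add_eq {w : DyckWord} (hw : w ≠ 0) :
    ∃ b q c, dyckHeight b ≤ dyckHeight q ∧ dyckHeight c ≤ dyckHeight q + 1 ∧
      b + q.nest + c = w := by
  induction w using dyckWord_induction with
  | zero => exact absurd rfl hw
  | nest_add u v _ ih =>
    by_cases huv : dyckHeight v ≤ dyckHeight u + 1
    · exact ⟨0, u, v, dyckHeight_nonneg u, huv, by rw [zero_add]⟩
    · have hv : v ≠ 0 := by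
        rintro rfl
        have := dyckHeight_nonneg u
        simp only [dyckHeight_zero] at huv
        lia
      obtain ⟨b, q, c, hb, hc, rfl⟩ := ih hv
      rw [dyckHeight_add_nest_add hb hc] at huv
      refine ⟨u.nest + b, q, c, ?_, hc, by simp only [add_assoc]⟩
      simp only [dyckHeight_add, dyckHeight_nest]
      lia

lemma eq_of_add_nest_add_eq {b q c b' q' c' : DyckWord} (hb : dyckHeight b ≤ dyckHeight q)
    (hb' : dyckHeight b' ≤ dyckHeight q') (hq : dyckHeight q = dyckHeight q')
    (h : b + q.nest + c = b' + q'.nest + c') : b = b' ∧ q = q' ∧ c = c' := by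
  induction b using dyckWord_induction generalizing b' with
  | zero =>
    cases b' using dyckWord_induction with
    | zero => simpa [nest_add_eq_nest_add_iff] using h
    | nest_add u' v' =>
      simp only [zero_add, add_assoc, nest_add_eq_nest_add_iff] at h
      -- `q.nest` is a factor of the left part of the second product, which is too low for that.
      simp only [dyckHeight_add, dyckHeight_nest, ← h.1] at hb'
      lia
  | nest_add u v _ ih =>
    simp only [dyckHeight_add, dyckHeight_nest] at hb
    cases b' using dyckWord_induction with
    | zero =>
      simp only [zero_add, add_assoc, nest_add_eq_nest_add_iff] at h
      rw [h.1] at hb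
      lia
    | nest_add u' v' =>
      simp only [dyckHeight_add, dyckHeight_nest] at hb'
      simp only [add_assoc, nest_add_eq_nest_add_iff] at h
      obtain ⟨rfl, rfl, rfl⟩ :=
        ih (b' := v') (by lia) (by lia) (by simpa only [add_assoc] using h.2)
      exact ⟨by rw [h.1], rfl, rfl⟩

end Factorization

section Rearrangement

/-- The pairs `(p, q)` of Dyck words of total semilength `n`, with `p` nonempty, in which `p`
exceeds `q` in height by at most one. -/
def heightDominatedPairs (n : ℕ) : Set (DyckWord × DyckWord) :=
  {p | p.1.semilength + p.2.semilength = n ∧ p.1 ≠ 0 ∧ dyckHeight p.1 ≤ dyckHeight p.2 + 1}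

/-- The map `(U B D C, Q) ↦ B U Q D C` merging a pair of Dyck words, with junk value `U Q D` at
`(0, Q)`. -/
def mergePair (p : DyckWord × DyckWord) : DyckWord :=
  p.1.insidePart + p.2.nest + p.1.outsidePart

lemma mergePair_nest_add (b c q : DyckWord) : mergePair (b.nest + c, q) = b + q.nest + c := by
  simp [mergePair]

lemma mem_heightDominatedPairs_iff {n : ℕ} {p : DyckWord × DyckWord} :
    p ∈ heightDominatedPairs n ↔ ∃ b q c, dyckHeight b ≤ dyckHeight q ∧
      dyckHeight c ≤ dyckHeight q + 1 ∧ (b + q.nest + c).semilength = n ∧ (b.nest + c, q) = p := by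
  constructor
  · obtain ⟨p, q⟩ := p
    rintro ⟨hn, hp, h⟩
    obtain ⟨b, c, rfl⟩ : ∃ b c : DyckWord, p = b.nest + c :=
      ⟨_, _, (DyckWord.nest_insidePart_add_outsidePart hp).symm⟩
    simp only [DyckWord.semilength_add, DyckWord.semilength_nest] at hn
    simp only [dyckHeight_add, dyckHeight_nest, max_le_iff, add_le_add_iff_right] at h
    refine ⟨b, q, c, h.1, h.2, ?_, rfl⟩
    simp only [DyckWord.semilength_add, DyckWord.semilength_nest]
    lia
  · rintro ⟨b, q, c, hb, hc, rfl, rfl⟩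
    refine ⟨?_, ?_, ?_⟩
    · simp only [DyckWord.semilength_add, DyckWord.semilength_nest]
      lia
    · simp
    · simpa using And.intro hb hc

lemma mergePair_bijOn {n : ℕ} (hn : n ≠ 0) :
    Set.BijOn mergePair (heightDominatedPairs n) {w | w.semilength = n} := by
  refine ⟨fun p hp => ?_, fun p hp p' hp' h => ?_, fun w hw => ?_⟩
  · obtain ⟨b, q, c, _, _, hsemilength, rfl⟩ := mem_heightDominatedPairs_iff.1 hp
    rwa [mergePair_nest_add]
  · obtain ⟨b, q, c, hb, hc, _, rfl⟩ := mem_heightDominatedPairs_iff.1 hp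
    obtain ⟨b', q', c', hb', hc', _, rfl⟩ := mem_heightDominatedPairs_iff.1 hp'
    rw [mergePair_nest_add, mergePair_nest_add] at h
    have hq : dyckHeight q + 1 = dyckHeight q' + 1 := by
      rw [← dyckHeight_add_nest_add hb hc, h, dyckHeight_add_nest_add hb' hc']
    obtain ⟨rfl, rfl, rfl⟩ := eq_of_add_nest_add_eq hb hb' (add_right_cancel hq) h
    rfl
  · have hw0 : w ≠ 0 := by
      rintro rfl
      exact hn hw.symm
    obtain ⟨b, q, c, hb, hc, rfl⟩ := exists_add_nest_add_eq hw0
    exact ⟨_, mem_heightDominatedPairs_iff.2 ⟨b, q, c, hb, hc, hw, rfl⟩, mergePair_nest_add b c q⟩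

lemma dyckPath_prodMap_bijOn (n : ℕ) :
    Set.BijOn (Prod.map dyckPath dyckPath) (heightDominatedPairs n)
      {PQ | (∃ a b : ℕ, IsDyck a PQ.1 ∧ IsDyck b PQ.2 ∧ a + b = n) ∧
        PQ.1 ≠ [] ∧ pathHeight PQ.1 ≤ pathHeight PQ.2 + 1} := by
  refine ⟨?_, (dyckPath_injective.prodMap dyckPath_injective).injOn, ?_⟩
  · rintro ⟨p, q⟩ ⟨hn, hp, h⟩
    exact ⟨⟨_, _, isDyck_iff_exists_dyckPath.2 ⟨p, rfl, rfl⟩,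
      isDyck_iff_exists_dyckPath.2 ⟨q, rfl, rfl⟩, hn⟩, dyckPath_eq_nil.not.2 hp, h⟩
  · rintro ⟨P, Q⟩ ⟨⟨a, b, hP, hQ, hn⟩, hne, h⟩
    obtain ⟨p, rfl, rfl⟩ := isDyck_iff_exists_dyckPath.1 hP
    obtain ⟨q, rfl, rfl⟩ := isDyck_iff_exists_dyckPath.1 hQ
    exact ⟨(p, q), ⟨hn, dyckPath_eq_nil.not.1 hne, h⟩, rfl⟩

end Rearrangement

theorem catalan_eq_card_pairs (n : ℕ) (hn : 1 ≤ n) :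
    catalan n =
      Nat.card {PQ : List ℤ × List ℤ //
        (∃ a b : ℕ, IsDyck a PQ.1 ∧ IsDyck b PQ.2 ∧ a + b = n) ∧
          PQ.1 ≠ [] ∧ pathHeight PQ.1 ≤ pathHeight PQ.2 + 1} := by
  calc catalan n
    _ = Nat.card {w : DyckWord // w.semilength = n} := by
      rw [Nat.card_eq_fintype_card, DyckWord.card_dyckWord_semilength_eq_catalan]
    _ = Nat.card (heightDominatedPairs n) :=
      (Nat.card_congr ((mergePair_bijOn (Nat.one_le_iff_ne_zero.1 hn)).equiv _)).symm
    _ = _ := Nat.card_congr ((dyckPath_prodMap_bijOn n).equiv _)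
end
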